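/- Let n and m be positive integers with m < n, let A be an n×n real symmetric positive semidefinite matrix with rank(A) = n − m, and let B be an m×n real matrix. Let W be an invertible m×m real matrix such that A + BᵀWB is invertible. Then B(A + BᵀWB)⁻¹Bᵀ = W⁻¹. -/

import Mathlib

open Matrix

/-!
On `ker A` the matrix `M = A + C * B` agrees with `C * B`, so injectivity of `M` makes `B` injective
on `ker A`. The nullity of `A` is at least the number of rows of `B`, hence `B` maps `ker A` onto
the whole space: every vector is `B x` for some `x` with `A x = 0`. For such `x`, `M x = C (B x)`
gives `B M⁻¹ C (B x) = B x`, that is, `B M⁻¹ C = 1`. With `C = BᵀW` this says that `B M⁻¹ Bᵀ` is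
the inverse of `W`.
-/

theorem disjoint_ker_of_injective_add_comp {R V V₁ V₂ : Type*} [Semiring R]
    [AddCommMonoid V] [AddCommMonoid V₁] [AddCommMonoid V₂]
    [Module R V] [Module R V₁] [Module R V₂]
    {f : V →ₗ[R] V₂} {g : V →ₗ[R] V₁} {h : V₁ →ₗ[R] V₂}
    (hinj : Function.Injective (f + h ∘ₗ g)) :
    Disjoint (LinearMap.ker f) (LinearMap.ker g) := by
  rw [Submodule.disjoint_def]
  intro x hfx hgx
  apply hinj
  simp [LinearMap.mem_ker.mp hfx, LinearMap.mem_ker.mp hgx]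

theorem map_eq_top_of_disjoint_ker_of_finrank_le {K V V₁ : Type*} [DivisionRing K]
    [AddCommGroup V] [AddCommGroup V₁] [Module K V] [Module K V₁] [Module.Finite K V₁]
    {p : Submodule K V} {g : V →ₗ[K] V₁} (hdisj : Disjoint p (LinearMap.ker g))
    (hp : Module.finrank K V₁ ≤ Module.finrank K p) : p.map g = ⊤ := by
  have hinj : Function.Injective (g.domRestrict p) :=
    LinearMap.injective_domRestrict_iff.mpr hdisj
  refine Submodule.eq_top_of_finrank_eq ((Submodule.finrank_le _).antisymm ?_)
  rwa [← LinearMap.range_domRestrict, LinearMap.finrank_range_of_inj hinj]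

section

variable {K m n : Type*} [Field K] [Fintype m] [Fintype n]

theorem exists_mulVec_eq_zero_and_mulVec_eq {l : Type*} {A : Matrix l n K} {B : Matrix m n K}
    {C : Matrix l m K} (hA : A.rank + Fintype.card m ≤ Fintype.card n)
    (hM : Function.Injective (A + C * B).mulVec) (y : m → K) :
    ∃ x, A *ᵥ x = 0 ∧ B *ᵥ x = y := by
  have hinj : Function.Injective (A.mulVecLin + C.mulVecLin ∘ₗ B.mulVecLin) := by
    rwa [← Matrix.mulVecLin_mul, ← Matrix.mulVecLin_add]
  have hnullity : Module.finrank K (m → K) ≤ Module.finrank K (LinearMap.ker A.mulVecLin) := by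
    have hrankNullity := A.mulVecLin.finrank_range_add_finrank_ker
    rw [Module.finrank_fintype_fun_eq_card] at hrankNullity ⊢
    rw [Matrix.rank] at hA
    omega
  have hmap := map_eq_top_of_disjoint_ker_of_finrank_le
    (disjoint_ker_of_injective_add_comp hinj) hnullity
  exact Submodule.mem_map.mp (hmap ▸ Submodule.mem_top)

variable [DecidableEq m] [DecidableEq n]

theorem mul_inv_add_mul_mul_eq_one {A : Matrix n n K} {B : Matrix m n K} {C : Matrix n m K}
    (hA : A.rank + Fintype.card m ≤ Fintype.card n) (hM : IsUnit (A + C * B)) :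
    B * (A + C * B)⁻¹ * C = 1 := by
  apply Matrix.ext_of_mulVec_single
  intro i
  obtain ⟨x, hAx, hBx⟩ := exists_mulVec_eq_zero_and_mulVec_eq hA
    (Matrix.mulVec_injective_of_isUnit hM) (Pi.single i 1)
  have hMx : (A + C * B) *ᵥ x = C *ᵥ Pi.single i 1 := by
    rw [Matrix.add_mulVec, hAx, zero_add, ← Matrix.mulVec_mulVec, hBx]
  calc (B * (A + C * B)⁻¹ * C) *ᵥ Pi.single i 1
      = B *ᵥ (((A + C * B)⁻¹ * (A + C * B)) *ᵥ x) := by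
        simp only [← Matrix.mulVec_mulVec, hMx]
    _ = 1 *ᵥ Pi.single i 1 := by
        rw [Matrix.nonsing_inv_mul _ ((Matrix.isUnit_iff_isUnit_det _).mp hM), Matrix.one_mulVec,
          hBx, Matrix.one_mulVec]

theorem schur_complement_maximal_nullity_general {A : Matrix n n K} {B : Matrix m n K}
    {C : Matrix n m K} {W : Matrix m m K} (hA : A.rank + Fintype.card m ≤ Fintype.card n)
    (hM : IsUnit (A + C * W * B)) : B * (A + C * W * B)⁻¹ * C = W⁻¹ := by
  refine (Matrix.inv_eq_left_inv ?_).symm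
  rw [Matrix.mul_assoc]
  exact mul_inv_add_mul_mul_eq_one hA hM

end

/-- If `A` is symmetric positive semidefinite with `rank A = n - m`
(maximal nullity) and `W` is invertible with `A + BᵀWB` invertible, then
`B (A + BᵀWB)⁻¹ Bᵀ = W⁻¹`. -/
theorem schur_complement_maximal_nullity {n m : ℕ} (hn : 0 < n) (hm : 0 < m) (hmn : m < n)
    (A : Matrix (Fin n) (Fin n) ℝ) (B : Matrix (Fin m) (Fin n) ℝ)
    (W : Matrix (Fin m) (Fin m) ℝ)
    (hA : A.PosSemidef) (hrA : A.rank = n - m)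
    (hW : IsUnit W) (hAW : IsUnit (A + Bᵀ * W * B)) :
    B * (A + Bᵀ * W * B)⁻¹ * Bᵀ = W⁻¹ :=
  schur_complement_maximal_nullity_general (by simp only [Fintype.card_fin]; omega) hAW
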